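/- arXiv:2101.09246 — 2 statements merged into one kernel-verified Lean document; each statement's English description precedes it below -/
import Mathlib

section
/- Let 0 < a ≤ b be real numbers and let g : [0,b) → ℝ be a bounded concave function such that g(x) = x for all x ∈ [0,a). Define h : [0,b) → ℝ by h(x) = x for 0 ≤ x ≤ a and, when a < b, h(x) = a(b−x)/(b−a) for a < x < b. Then 3a·∫_0^b (2x − g(x))·g(x) dx = 4·(∫_0^b g(x) dx)² holds if and only if a = b, or g(x) = h(x) for all x ∈ [0,b). -/
open MeasureTheory intervalIntegral
open Set

/-!
Let `h` be the extremal function. The deficit `F(g) = 4 (∫ g)² - 3a ∫ (2x - g) g` is a strictly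
convex quadratic functional with `F(h) = 0`. Put `k = g - h`. Since `h` is affine on `[a, b)`, the
deviation `k` is still concave there, and it vanishes on `[0, a]`. Expanding around `h` gives
`F(g) = 2a ∫ (2b - 3(x - h)) k + 4 (∫ k)² + 3a ∫ k²`, where the weight of the first-order term is a
positive multiple of `m - x` on `[a, b]`, with `m = (a + 2b) / 3`. This `m` is the mean of `x` for
the density `x - a`, and the slope `k / (x - a)` is decreasing, so the first-order term is
nonnegative and `F(g) ≥ 3a ∫ (g - h)²`.
-/

lemma memLp_of_concaveOn_Ico_of_abs_le {f : ℝ → ℝ} {a b M : ℝ} (hf : ConcaveOn ℝ (Ico a b) f)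
    (hM : ∀ x ∈ Ico a b, |f x| ≤ M) (p : ENNReal) : MemLp f p (volume.restrict (Ioc a b)) := by
  rw [← Measure.restrict_congr_set Ioo_ae_eq_Ioc]
  have hcont : ContinuousOn f (Ioo a b) := interior_Ico (a := a) (b := b) ▸ hf.continuousOn_interior
  refine memLp_of_bounded (a := -M) (b := M) ?_ (hcont.aestronglyMeasurable measurableSet_Ioo) p
  filter_upwards [ae_restrict_mem measurableSet_Ioo] with x hx
  exact abs_le.1 (hM x (Ioo_subset_Ico_self hx))

lemma eq_of_concaveOn_of_eqOn_Ico {f φ : ℝ → ℝ} {a b c : ℝ} (hca : c < a)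
    (hf : ConcaveOn ℝ (Ico c b) f) (hφ : Continuous φ) (heq : ∀ x ∈ Ico c a, f x = φ x) :
    ∀ x ∈ Ico c b, x ≤ a → f x = φ x := by
  intro x hx hxa
  rcases hxa.lt_or_eq with hlt | rfl
  · exact heq x ⟨hx.1, hlt⟩
  have hcont : ContinuousOn f (Ioc c x) := hf.continuousOn_interior.mono <| by
    rw [interior_Ico]
    exact fun y hy => ⟨hy.1, hy.2.trans_lt hx.2⟩
  have hIoo : EqOn f φ (Ioo c x) := fun y hy => heq y (Ioo_subset_Ico_self hy)
  exact hIoo.of_subset_closure hcont hφ.continuousOn Ioo_subset_Ioc_self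
    (closure_Ioo hca.ne ▸ Ioc_subset_Icc_self) (right_mem_Ioc.2 hca)

lemma sub_secant_mul_sub_nonneg {𝕜 : Type*} [Field 𝕜] [LinearOrder 𝕜] [IsStrictOrderedRing 𝕜]
    {s : Set 𝕜} {f : 𝕜 → 𝕜} {a m x : 𝕜} (hf : ConcaveOn 𝕜 s f) (ha : a ∈ s) (hm : m ∈ s)
    (hx : x ∈ s) (ham : a < m) (hax : a < x) :
    0 ≤ (f x - (f a + slope f a m * (x - a))) * (m - x) := by
  have hanti := hf.slope_anti ha
  have hslope : 0 ≤ (slope f a x - slope f a m) * (m - x) := by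
    rcases le_total x m with hxm | hmx
    · exact mul_nonneg (sub_nonneg.2 (hanti ⟨hx, hax.ne'⟩ ⟨hm, ham.ne'⟩ hxm)) (sub_nonneg.2 hxm)
    · exact mul_nonneg_of_nonpos_of_nonpos
        (sub_nonpos.2 (hanti ⟨hm, ham.ne'⟩ ⟨hx, hax.ne'⟩ hmx)) (sub_nonpos.2 hmx)
  have hfx : f x - f a = slope f a x * (x - a) := by
    rw [slope_def_field, div_mul_cancel₀ _ (sub_pos.2 hax).ne']
  calc 0 ≤ (x - a) * ((slope f a x - slope f a m) * (m - x)) :=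
        mul_nonneg (sub_pos.2 hax).le hslope
    _ = (f x - (f a + slope f a m * (x - a))) * (m - x) := by linear_combination (x - m) * hfx

lemma integral_quadratic (a b A B C : ℝ) :
    ∫ x in a..b, (A + B * x + C * x ^ 2) =
      A * (b - a) + B * (b ^ 2 - a ^ 2) / 2 + C * (b ^ 3 - a ^ 3) / 3 := by
  have hA : IntervalIntegrable (fun _ => A) volume a b := intervalIntegrable_const
  have hB : IntervalIntegrable (fun x => B * x) volume a b :=
    Continuous.intervalIntegrable (by fun_prop) _ _
  have hC : IntervalIntegrable (fun x => C * x ^ 2) volume a b :=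
    Continuous.intervalIntegrable (by fun_prop) _ _
  rw [integral_add (hA.add hB) hC, integral_add hA hB, intervalIntegral.integral_const,
    intervalIntegral.integral_const_mul, intervalIntegral.integral_const_mul, integral_id,
    integral_pow, smul_eq_mul]
  push_cast
  ring

/-- `(a + 2b) / 3` is the mean of `x` for the density `x - a`, so the secant of `f` through `a`
contributes only through its value at `a`. -/
lemma mul_sq_div_six_le_integral_mul_sub {f : ℝ → ℝ} {a b : ℝ} (hab : a < b)
    (hf : ConcaveOn ℝ (Ico a b) f) (hint : IntervalIntegrable f volume a b) :
    f a * (b - a) ^ 2 / 6 ≤ ∫ x in a..b, f x * ((a + 2 * b) / 3 - x) := by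
  set m := (a + 2 * b) / 3 with hm
  have ham : a < m := by linarith
  have hmb : m < b := by linarith
  set c := slope f a m
  calc f a * (b - a) ^ 2 / 6 = ∫ x in a..b, (f a + c * (x - a)) * (m - x) := by
        have hexpand (x : ℝ) : (f a + c * (x - a)) * (m - x) =
            (f a - c * a) * m + (c * m - f a + c * a) * x + -c * x ^ 2 := by ring
        simp only [hexpand, integral_quadratic]
        rw [hm]
        ring
    _ ≤ ∫ x in a..b, f x * (m - x) := by
        refine integral_mono_on_of_le_Ioo hab.le (Continuous.intervalIntegrable (by fun_prop) _ _)
          (hint.mul_continuousOn (by fun_prop)) fun x hx => ?_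
        have h := sub_secant_mul_sub_nonneg hf (left_mem_Ico.2 hab) ⟨ham.le, hmb⟩
          (Ioo_subset_Ico_self hx) ham hx.1
        rwa [sub_mul, sub_nonneg] at h

/-- The extremal function `h` of the inequality, extended to all of `ℝ`: it rises with slope `1` up
to `a` and then decreases linearly, reaching `0` at `b`. -/
noncomputable def tent (a b x : ℝ) : ℝ := if x ≤ a then x else a * (b - x) / (b - a)

lemma tent_of_le {a b x : ℝ} (hx : x ≤ a) : tent a b x = x := if_pos hx

lemma tent_of_lt {a b x : ℝ} (hx : a < x) : tent a b x = a * (b - x) / (b - a) :=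
  if_neg hx.not_ge

lemma tent_of_ge {a b x : ℝ} (hab : a < b) (hx : a ≤ x) :
    tent a b x = a * (b - x) / (b - a) := by
  rcases hx.eq_or_lt with rfl | hlt
  · rw [tent_of_le le_rfl, mul_div_cancel_right₀ _ (sub_pos.2 hab).ne']
  · exact tent_of_lt hlt

lemma measurable_tent (a b : ℝ) : Measurable (tent a b) :=
  Measurable.ite measurableSet_Iic (by fun_prop) (by fun_prop)

lemma tent_mem_Icc {a b x : ℝ} (hx : x ∈ Icc 0 b) (ha : 0 ≤ a) : tent a b x ∈ Icc 0 a := by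
  rcases le_or_gt x a with hxa | hax
  · rw [tent_of_le hxa]
    exact ⟨hx.1, hxa⟩
  · have hd : 0 < b - a := by linarith [hx.2]
    rw [tent_of_lt hax]
    exact ⟨div_nonneg (mul_nonneg ha (sub_nonneg.2 hx.2)) hd.le,
      (div_le_iff₀ hd).2 (mul_le_mul_of_nonneg_left (by linarith) ha)⟩

lemma memLp_tent {a b : ℝ} (ha : 0 ≤ a) (p : ENNReal) :
    MemLp (tent a b) p (volume.restrict (Ioc 0 b)) := by
  refine memLp_of_bounded (a := 0) (b := a) ?_ (measurable_tent a b).aestronglyMeasurable p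
  filter_upwards [ae_restrict_mem measurableSet_Ioc] with x hx
  exact tent_mem_Icc (Ioc_subset_Icc_self hx) ha

lemma convexOn_tent {a b : ℝ} (hab : a < b) : ConvexOn ℝ (Ici a) (tent a b) := by
  refine ⟨convex_Ici a, fun x hx y hy s t hs ht hst => le_of_eq ?_⟩
  rw [tent_of_ge hab hx, tent_of_ge hab hy, tent_of_ge hab (convex_Ici a hx hy hs ht hst)]
  obtain rfl : t = 1 - s := by linarith
  simp only [smul_eq_mul]
  ring

lemma integral_comp_tent {a b : ℝ} (ha : 0 ≤ a) (hab : a ≤ b) {F : ℝ → ℝ → ℝ}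
    (hF : Continuous fun p : ℝ × ℝ => F p.1 p.2) :
    ∫ x in 0..b, F x (tent a b x) =
      (∫ x in 0..a, F x x) + ∫ x in a..b, F x (a * (b - x) / (b - a)) := by
  have hleft : EqOn (fun x => F x x) (fun x => F x (tent a b x)) (uIoo 0 a) := fun x hx => by
    rw [uIoo_of_le ha] at hx
    simp only [tent_of_le hx.2.le]
  have hright : EqOn (fun x => F x (a * (b - x) / (b - a))) (fun x => F x (tent a b x))
      (uIoo a b) := fun x hx => by
    rw [uIoo_of_le hab] at hx
    simp only [tent_of_lt hx.1]
  have hleft_int : IntervalIntegrable (fun x => F x x) volume 0 a :=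
    (hF.comp (by fun_prop : Continuous fun x : ℝ => (x, x))).intervalIntegrable _ _
  have hright_int : IntervalIntegrable (fun x => F x (a * (b - x) / (b - a))) volume a b :=
    (hF.comp (by fun_prop : Continuous fun x : ℝ =>
      (x, a * (b - x) / (b - a)))).intervalIntegrable _ _
  rw [← integral_add_adjacent_intervals (hleft_int.congr_uIoo hleft)
    (hright_int.congr_uIoo hright), integral_congr_uIoo hleft, integral_congr_uIoo hright]

lemma integral_tent {a b : ℝ} (ha : 0 ≤ a) (hab : a ≤ b) : ∫ x in 0..b, tent a b x = a * b / 2 := by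
  rw [integral_comp_tent ha hab (F := fun _ y => y) (by fun_prop), integral_id]
  rcases hab.eq_or_lt with rfl | hlt
  · rw [integral_same]
    ring
  have hd : b - a ≠ 0 := (sub_pos.2 hlt).ne'
  have hexpand (x : ℝ) : a * (b - x) / (b - a) =
      a * b / (b - a) + -a / (b - a) * x + 0 * x ^ 2 := by ring
  simp only [hexpand, integral_quadratic]
  field_simp
  ring

lemma integral_two_mul_sub_tent_mul_tent {a b : ℝ} (ha : 0 ≤ a) (hab : a ≤ b) :
    ∫ x in 0..b, (2 * x - tent a b x) * tent a b x = a * b ^ 2 / 3 := by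
  rw [integral_comp_tent ha hab (F := fun x y => (2 * x - y) * y) (by fun_prop)]
  have hsq (x : ℝ) : (2 * x - x) * x = 0 + 0 * x + 1 * x ^ 2 := by ring
  simp only [hsq, integral_quadratic]
  rcases hab.eq_or_lt with rfl | hlt
  · rw [integral_same]
    ring
  have hd : b - a ≠ 0 := (sub_pos.2 hlt).ne'
  have hexpand (x : ℝ) : (2 * x - a * (b - x) / (b - a)) * (a * (b - x) / (b - a)) =
      -(a * b) ^ 2 / (b - a) ^ 2 + 2 * a * b ^ 2 / (b - a) ^ 2 * x +
        (a ^ 2 - 2 * a * b) / (b - a) ^ 2 * x ^ 2 := by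
    field_simp
    ring
  simp only [hexpand, integral_quadratic]
  field_simp
  ring

/-- The right-hand side minus the left-hand side of the inequality
`3a ∫₀ᵇ (2x - g) g ≤ 4 (∫₀ᵇ g)²`, as a quadratic functional of `g`. -/
noncomputable def deficit (a b : ℝ) (g : ℝ → ℝ) : ℝ :=
  4 * (∫ x in 0..b, g x) ^ 2 - 3 * a * ∫ x in 0..b, (2 * x - g x) * g x

lemma deficit_congr {a b : ℝ} {f g : ℝ → ℝ} (hb : 0 ≤ b) (h : EqOn f g (Ioo 0 b)) :
    deficit a b f = deficit a b g := by
  have hprod : EqOn (fun x => (2 * x - f x) * f x) (fun x => (2 * x - g x) * g x) (Ioo 0 b) :=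
    fun x hx => by simp only [h hx]
  rw [deficit, deficit, integral_congr_Ioo_of_le hb h, integral_congr_Ioo_of_le hb hprod]

lemma deficit_tent {a b : ℝ} (ha : 0 ≤ a) (hab : a ≤ b) : deficit a b (tent a b) = 0 := by
  rw [deficit, integral_tent ha hab, integral_two_mul_sub_tent_mul_tent ha hab]
  ring

lemma integral_two_mul_sub_add_mul_add {α : Type*} [MeasurableSpace α] {μ : Measure α}
    {u f k : α → ℝ} (hu : MemLp u 2 μ) (hf : MemLp f 2 μ) (hk : MemLp k 2 μ) :
    ∫ x, (2 * u x - (f x + k x)) * (f x + k x) ∂μ =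
      (∫ x, (2 * u x - f x) * f x ∂μ) + 2 * (∫ x, (u x - f x) * k x ∂μ) - ∫ x, k x ^ 2 ∂μ := by
  have hff : Integrable (fun x => (2 * u x - f x) * f x) μ :=
    ((hu.const_mul 2).sub hf).integrable_mul hf
  have hfk : Integrable (fun x => (u x - f x) * k x) μ := (hu.sub hf).integrable_mul hk
  have hexpand (x : α) : (2 * u x - (f x + k x)) * (f x + k x) =
      (2 * u x - f x) * f x + 2 * ((u x - f x) * k x) - k x ^ 2 := by ring
  simp only [hexpand]
  have hsum : Integrable (fun x => (2 * u x - f x) * f x + 2 * ((u x - f x) * k x)) μ :=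
    hff.add (hfk.const_mul 2)
  rw [integral_sub hsum hk.integrable_sq, integral_add hff (hfk.const_mul 2),
    MeasureTheory.integral_const_mul]

lemma deficit_tent_add {a b : ℝ} (ha : 0 ≤ a) (hab : a ≤ b) {k : ℝ → ℝ}
    (hk : MemLp k 2 (volume.restrict (Ioc 0 b))) :
    deficit a b (fun x => tent a b x + k x) =
      2 * a * (∫ x in 0..b, (2 * b - 3 * (x - tent a b x)) * k x) +
        4 * (∫ x in 0..b, k x) ^ 2 + 3 * a * ∫ x in 0..b, k x ^ 2 := by
  have hb : 0 ≤ b := ha.trans hab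
  have hu : MemLp (fun x : ℝ => x) 2 (volume.restrict (Ioc 0 b)) := by
    refine memLp_of_bounded (a := 0) (b := b) ?_ measurable_id.aestronglyMeasurable 2
    filter_upwards [ae_restrict_mem measurableSet_Ioc] with x hx using Ioc_subset_Icc_self hx
  have ht : MemLp (tent a b) 2 (volume.restrict (Ioc 0 b)) := memLp_tent ha 2
  have hk1 : Integrable k (volume.restrict (Ioc 0 b)) := hk.integrable one_le_two
  have ht1 : Integrable (tent a b) (volume.restrict (Ioc 0 b)) := ht.integrable one_le_two
  have hutk : Integrable (fun x => (x - tent a b x) * k x) (volume.restrict (Ioc 0 b)) :=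
    (hu.sub ht).integrable_mul hk
  have hweight (x : ℝ) : (2 * b - 3 * (x - tent a b x)) * k x =
      2 * b * k x - 3 * ((x - tent a b x) * k x) := by ring
  have htent := integral_tent ha hab
  have htent_sq := integral_two_mul_sub_tent_mul_tent ha hab
  simp only [deficit, hweight, integral_of_le hb] at htent htent_sq ⊢
  rw [integral_two_mul_sub_add_mul_add hu ht hk, integral_add ht1 hk1,
    integral_sub (hk1.const_mul _) (hutk.const_mul _), MeasureTheory.integral_const_mul,
    MeasureTheory.integral_const_mul, htent, htent_sq]
  ring

lemma integral_tent_variation_nonneg {a b : ℝ} (ha : 0 ≤ a) (hab : a < b) {k : ℝ → ℝ}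
    (hk : ConcaveOn ℝ (Ico a b) k) (hk0 : ∀ x ∈ Icc 0 a, k x = 0)
    (hint : IntervalIntegrable k volume a b) :
    0 ≤ ∫ x in 0..b, (2 * b - 3 * (x - tent a b x)) * k x := by
  have hb : 0 ≤ b := ha.trans hab.le
  have hd : 0 < b - a := sub_pos.2 hab
  have hweight : EqOn (fun x => (2 * b - 3 * (x - tent a b x)) * k x)
      (fun x => 3 * b / (b - a) * (k x * ((a + 2 * b) / 3 - x))) (Ioo a b) := fun x hx => by
    simp only [tent_of_lt hx.1]
    field_simp
    ring
  have hmean : 0 ≤ ∫ x in a..b, k x * ((a + 2 * b) / 3 - x) := by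
    simpa only [hk0 a (right_mem_Icc.2 ha), zero_mul, zero_div]
      using mul_sq_div_six_le_integral_mul_sub hab hk hint
  calc 0 ≤ 3 * b / (b - a) * ∫ x in a..b, k x * ((a + 2 * b) / 3 - x) := by positivity
    _ = ∫ x in a..b, (2 * b - 3 * (x - tent a b x)) * k x := by
        rw [integral_congr_Ioo_of_le hab.le hweight, intervalIntegral.integral_const_mul]
    _ = ∫ x in 0..b, (2 * b - 3 * (x - tent a b x)) * k x := by
        rw [integral_of_le hab.le, integral_of_le hb]
        refine (setIntegral_eq_of_subset_of_forall_sdiff_eq_zero measurableSet_Ioc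
          (Ioc_subset_Ioc_left ha) fun x hx => ?_).symm
        have hxa : x ≤ a := not_lt.1 fun hax => hx.2 ⟨hax, hx.1.2⟩
        rw [hk0 x ⟨hx.1.1.le, hxa⟩, mul_zero]

lemma concaveOn_sub_tent {a b : ℝ} (hab : a < b) {g : ℝ → ℝ} (hg : ConcaveOn ℝ (Ico a b) g) :
    ConcaveOn ℝ (Ico a b) fun x => g x - tent a b x :=
  hg.sub ((convexOn_tent hab).subset Ico_subset_Ici_self (convex_Ico a b))

theorem mul_integral_sub_tent_sq_le_deficit {a b : ℝ} (ha : 0 ≤ a) (hab : a < b) {g : ℝ → ℝ}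
    (hconc : ConcaveOn ℝ (Ico a b) g) (hg : MemLp g 2 (volume.restrict (Ioc 0 b)))
    (hga : ∀ x ∈ Icc 0 a, g x = x) :
    3 * a * ∫ x in 0..b, (g x - tent a b x) ^ 2 ≤ deficit a b g := by
  have hk : MemLp (fun x => g x - tent a b x) 2 (volume.restrict (Ioc 0 b)) :=
    hg.sub (memLp_tent ha 2)
  have hk0 : ∀ x ∈ Icc 0 a, g x - tent a b x = 0 := fun x hx => by
    rw [hga x hx, tent_of_le hx.2, sub_self]
  have hint : IntervalIntegrable (fun x => g x - tent a b x) volume a b :=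
    (intervalIntegrable_iff_integrableOn_Ioc_of_le hab.le).2
      ((hk.integrable one_le_two).mono_measure
        (Measure.restrict_mono_set volume (Ioc_subset_Ioc_left ha)))
  have hfirst := integral_tent_variation_nonneg ha hab (concaveOn_sub_tent hab hconc) hk0 hint
  have hexpand := deficit_tent_add ha hab.le hk
  simp only [add_sub_cancel] at hexpand
  rw [hexpand]
  exact le_add_of_nonneg_left (by positivity)

lemma eqOn_zero_of_setIntegral_sq_eq_zero {α : Type*} [TopologicalSpace α] [MeasurableSpace α]
    {μ : Measure α} [μ.IsOpenPosMeasure] {s U : Set α} {k : α → ℝ}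
    (hk : MemLp k 2 (μ.restrict s)) (h : ∫ x in s, k x ^ 2 ∂μ = 0) (hU : IsOpen U) (hUs : U ⊆ s)
    (hcont : ContinuousOn k U) : EqOn k 0 U := by
  have hsq : (fun x => k x ^ 2) =ᵐ[μ.restrict s] 0 :=
    (integral_eq_zero_iff_of_nonneg (fun x => sq_nonneg (k x)) hk.integrable_sq).1 h
  have hae : k =ᵐ[μ.restrict s] 0 := hsq.mono fun x hx => pow_eq_zero_iff two_ne_zero |>.1 hx
  exact Measure.eqOn_open_of_ae_eq (ae_restrict_of_ae_restrict_of_subset hUs hae) hU hcont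
    continuousOn_const

theorem eqOn_tent_of_deficit_eq_zero {a b : ℝ} (ha : 0 < a) (hab : a < b) {g : ℝ → ℝ}
    (hconc : ConcaveOn ℝ (Ico a b) g) (hg : MemLp g 2 (volume.restrict (Ioc 0 b)))
    (hga : ∀ x ∈ Icc 0 a, g x = x) (h : deficit a b g = 0) : EqOn g (tent a b) (Ico 0 b) := by
  have hb : 0 ≤ b := ha.le.trans hab.le
  have hsq : ∫ x in Ioc 0 b, (g x - tent a b x) ^ 2 = 0 := by
    have hle := mul_integral_sub_tent_sq_le_deficit ha.le hab hconc hg hga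
    rw [h, integral_of_le hb] at hle
    exact le_antisymm (nonpos_of_mul_nonpos_right hle (by positivity))
      (setIntegral_nonneg measurableSet_Ioc fun x _ => sq_nonneg _)
  have hcont : ContinuousOn (fun x => g x - tent a b x) (Ioo a b) :=
    interior_Ico (a := a) (b := b) ▸ (concaveOn_sub_tent hab hconc).continuousOn_interior
  have hzero := eqOn_zero_of_setIntegral_sq_eq_zero (hg.sub (memLp_tent ha.le 2)) hsq isOpen_Ioo
    (fun x hx => ⟨ha.trans hx.1, hx.2.le⟩) hcont
  intro x hx
  rcases le_or_gt x a with hxa | hax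
  · rw [hga x ⟨hx.1, hxa⟩, tent_of_le hxa]
  · exact sub_eq_zero.1 (hzero ⟨hax, hx.2⟩)

theorem stmt_1_general {a b : ℝ} (ha : 0 < a) (hab : a ≤ b) {g : ℝ → ℝ}
    (hconc : ConcaveOn ℝ (Ico a b) g) (hg : MemLp g 2 (volume.restrict (Ioc 0 b)))
    (hga : ∀ x ∈ Ico 0 b, x ≤ a → g x = x) :
    3 * a * ∫ x in 0..b, (2 * x - g x) * g x = 4 * (∫ x in 0..b, g x) ^ 2 ↔
      a = b ∨ ∀ x ∈ Ico 0 b, g x = tent a b x := by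
  rw [eq_comm, ← sub_eq_zero, ← deficit]
  constructor
  · intro h
    refine hab.eq_or_lt.imp_right fun hlt => ?_
    exact eqOn_tent_of_deficit_eq_zero ha hlt hconc hg
      (fun x hx => hga x ⟨hx.1, hx.2.trans_lt hlt⟩ hx.2) h
  · intro h
    have htent : EqOn g (tent a b) (Ico 0 b) := by
      rcases h with rfl | h
      · exact fun x hx => (hga x hx hx.2.le).trans (tent_of_le hx.2.le).symm
      · exact h
    rw [deficit_congr (ha.le.trans hab) (htent.mono Ioo_subset_Ico_self), deficit_tent ha.le hab]

/-- Lemma 3.3 (equality characterization): for `0 < a ≤ b` and a bounded concave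
function `g` on `[0, b)` with `g x = x` on `[0, a)`, equality
`3a·∫_0^b (2x − g x)·g x dx = 4·(∫_0^b g x dx)²` holds iff `a = b` or `g` equals
the function `h` given by `h x = x` for `x ≤ a` and `h x = a(b−x)/(b−a)` for `a < x`. -/
theorem stmt_1 (a b : ℝ) (ha : 0 < a) (hab : a ≤ b) (g : ℝ → ℝ)
    (hconc : ConcaveOn ℝ (Set.Ico 0 b) g)
    (hbdd : ∃ M : ℝ, ∀ x ∈ Set.Ico (0 : ℝ) b, |g x| ≤ M)
    (hga : ∀ x ∈ Set.Ico (0 : ℝ) a, g x = x) :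
    3 * a * ∫ x in (0 : ℝ)..b, (2 * x - g x) * g x =
        4 * (∫ x in (0 : ℝ)..b, g x) ^ 2 ↔
      a = b ∨ ∀ x ∈ Set.Ico (0 : ℝ) b,
        g x = if x ≤ a then x else a * (b - x) / (b - a) := by
  obtain ⟨M, hM⟩ := hbdd
  exact stmt_1_general ha hab (hconc.subset (Ico_subset_Ico_left ha.le) (convex_Ico a b))
    (memLp_of_concaveOn_Ico_of_abs_le hconc hM 2)
    (eq_of_concaveOn_of_eqOn_Ico ha hconc continuous_id hga)
end

section
/- Let a > 0 be a real number, let n ≥ 1 be an integer, and let g : [0,a) → ℝ be a nonnegative bounded concave function with g(0) > 0. Then g(0)^{n−1}·∫_0^a x·g(x)^{n−1} dx = (n/(n+1))·(∫_0^a g(x)^{n−1} dx)² holds if and only if n = 1 or g(x) = (1 − x/a)·g(0) for all x ∈ [0,a). -/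
open MeasureTheory intervalIntegral

/-!
Put `p = n - 1`, and let `h` be the affine function with `h 0 = g 0` whose zero `b` is chosen so
that `∫₀ᵇ h ^ p = ∫₀ᵃ g ^ p`. Affine functions satisfy the claimed equality, so equality for `g`
says that `g ^ p` on `(0, a)` and `h ^ p` on `(0, b)` have the same mass and the same first moment.
Since `g` lies above the chord from `(0, g 0)` to `(a, 0)`, we have `a ≤ b`. The concave function
`g - h` vanishes at `0`, so it changes sign at most once on `(0, a)`, from positive to negative;
hence `h ^ p - g ^ p` on `(0, b)`, with `g` extended by zero, changes sign at most once, from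
negative to positive, at some `c`. Then `(x - c) * (h ^ p - g ^ p)` is nonnegative with integral
zero, which for `p > 0` forces `g = h` almost everywhere, so that `a = b` and, by continuity,
`g = h` on `[0, a)`.
-/

lemma ae_eq_of_single_crossing {α : Type*} [MeasurableSpace α] {μ : Measure α} {f u v : α → ℝ}
    {c : ℝ} (hu : Integrable u μ) (hv : Integrable v μ)
    (hfu : Integrable (fun x => f x * u x) μ) (hfv : Integrable (fun x => f x * v x) μ)
    (hmass : ∫ x, u x ∂μ = ∫ x, v x ∂μ) (hmoment : ∫ x, f x * u x ∂μ = ∫ x, f x * v x ∂μ)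
    (hcross : ∀ᵐ x ∂μ, 0 ≤ (f x - c) * (v x - u x)) (hc : ∀ᵐ x ∂μ, f x ≠ c) :
    u =ᵐ[μ] v := by
  have hexpand : ∀ x, (f x - c) * (v x - u x) = f x * v x - f x * u x - (c * v x - c * u x) :=
    fun x => by ring
  have hint : Integrable (fun x => (f x - c) * (v x - u x)) μ := by
    simp only [hexpand]
    exact (hfv.sub hfu).sub ((hv.const_mul c).sub (hu.const_mul c))
  have hzero : ∫ x, (f x - c) * (v x - u x) ∂μ = 0 := by
    simp only [hexpand]
    rw [integral_sub (by exact hfv.sub hfu) (by exact (hv.const_mul c).sub (hu.const_mul c)),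
      integral_sub hfv hfu, integral_sub (hv.const_mul c) (hu.const_mul c),
      MeasureTheory.integral_const_mul, MeasureTheory.integral_const_mul, hmass, hmoment,
      sub_self, sub_self, sub_self]
  filter_upwards [(integral_eq_zero_iff_of_nonneg_ae hcross hint).1 hzero, hc] with x hx hxc
  exact (sub_eq_zero.1 ((mul_eq_zero.1 hx).resolve_left (sub_ne_zero.2 hxc))).symm

lemma setIntegral_Ioo_indicator_Ioo {E : Type*} [NormedAddCommGroup E] [NormedSpace ℝ E]
    {f : ℝ → E} {a b c : ℝ} (hab : a ≤ b) (hbc : b ≤ c) :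
    ∫ x in Set.Ioo a c, (Set.Ioo a b).indicator f x = ∫ x in a..b, f x := by
  rw [setIntegral_indicator measurableSet_Ioo,
    Set.inter_eq_right.2 (Set.Ioo_subset_Ioo_right hbc), integral_of_le hab,
    integral_Ioc_eq_integral_Ioo]

section Ramp

/-- The affine function with value `s` at `0` and with its zero at `b`. Each concave function is
compared with ramps having the same value at `0`. For `b = 0` it is the constant `s`. -/
noncomputable def ramp (s b x : ℝ) : ℝ := (1 - x / b) * s

variable {s b x p : ℝ}

@[simp] lemma ramp_zero_right (s b : ℝ) : ramp s b 0 = s := by simp [ramp]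

@[fun_prop] lemma continuous_ramp (s b : ℝ) : Continuous (ramp s b) := by
  unfold ramp
  fun_prop

lemma ramp_pos (hs : 0 < s) (hb : 0 < b) (hx : x < b) : 0 < ramp s b x :=
  mul_pos (sub_pos.2 ((div_lt_one hb).2 hx)) hs

lemma convexOn_ramp {S : Set ℝ} (hS : Convex ℝ S) (s b : ℝ) : ConvexOn ℝ S (ramp s b) := by
  refine ⟨hS, fun x _ y _ α β _ _ hαβ => le_of_eq ?_⟩
  obtain rfl : α = 1 - β := eq_sub_of_add_eq hαβ
  simp only [ramp, smul_eq_mul]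
  ring

lemma integral_ramp_rpow (hs : 0 < s) (hb : 0 < b) (hp : -1 < p) :
    ∫ x in (0 : ℝ)..b, ramp s b x ^ p = s ^ p * b / (p + 1) := by
  calc ∫ x in (0 : ℝ)..b, ramp s b x ^ p = ∫ x in (0 : ℝ)..b, (1 - x / b) ^ p * s ^ p :=
        integral_congr_Ioo_of_le hb.le fun x hx =>
          Real.mul_rpow (sub_nonneg.2 ((div_le_one hb).2 hx.2.le)) hs.le
    _ = b * (∫ y in (0 : ℝ)..1, y ^ p) * s ^ p := by
        rw [intervalIntegral.integral_mul_const,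
          integral_comp_sub_div (fun y : ℝ => y ^ p) hb.ne' 1, smul_eq_mul, div_self hb.ne',
          zero_div, sub_self, sub_zero]
    _ = s ^ p * b / (p + 1) := by
        have hp1 : p + 1 ≠ 0 := by linarith
        rw [integral_rpow (.inl hp), Real.one_rpow, Real.zero_rpow hp1]
        ring

lemma intervalIntegrable_ramp_rpow (hs : 0 < s) (hb : 0 < b) (hp : -1 < p) :
    IntervalIntegrable (fun x => ramp s b x ^ p) volume 0 b := by
  have hp1 : 0 < p + 1 := by linarith
  refine intervalIntegrable_of_integral_ne_zero ?_
  rw [integral_ramp_rpow hs hb hp]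
  positivity

lemma integral_mul_ramp_rpow (hs : 0 < s) (hb : 0 < b) (hp : -1 < p) :
    ∫ x in (0 : ℝ)..b, x * ramp s b x ^ p = s ^ p * b ^ 2 / ((p + 1) * (p + 2)) := by
  have hp1 : 0 < p + 1 := by linarith
  have hp2 : 0 < p + 2 := by linarith
  have hsplit : Set.EqOn (fun x => x * ramp s b x ^ p)
      (fun x => b * ramp s b x ^ p - b / s * ramp s b x ^ (p + 1)) (Set.Ioo 0 b) := by
    intro x hx
    have hx_eq : x = b - b / s * ramp s b x := by
      simp only [ramp]
      field_simp
      ring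
    simp only [Real.rpow_add_one (ramp_pos hs hb hx.2).ne']
    linear_combination ramp s b x ^ p * hx_eq
  rw [integral_congr_Ioo_of_le hb.le hsplit, intervalIntegral.integral_sub
      ((intervalIntegrable_ramp_rpow hs hb hp).const_mul b)
      ((intervalIntegrable_ramp_rpow hs hb (by linarith)).const_mul _),
    intervalIntegral.integral_const_mul, intervalIntegral.integral_const_mul,
    integral_ramp_rpow hs hb hp, integral_ramp_rpow hs hb (by linarith),
    Real.rpow_add_one hs.ne']
  field_simp
  ring

lemma rpow_mul_integral_mul_ramp_rpow (hs : 0 < s) (hb : 0 < b) (hp : -1 < p) :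
    s ^ p * ∫ x in (0 : ℝ)..b, x * ramp s b x ^ p =
      (p + 1) / (p + 2) * (∫ x in (0 : ℝ)..b, ramp s b x ^ p) ^ 2 := by
  have hp1 : 0 < p + 1 := by linarith
  rw [integral_mul_ramp_rpow hs hb hp, integral_ramp_rpow hs hb hp]
  field_simp

lemma integral_ramp_rpow_le_iff {a : ℝ} (hs : 0 < s) (ha : 0 < a) (hb : 0 < b) (hp : -1 < p) :
    ∫ x in (0 : ℝ)..a, ramp s a x ^ p ≤ ∫ x in (0 : ℝ)..b, ramp s b x ^ p ↔ a ≤ b := by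
  have hp1 : 0 < p + 1 := by linarith
  rw [integral_ramp_rpow hs ha hp, integral_ramp_rpow hs hb hp, div_le_div_iff_of_pos_right hp1,
    mul_le_mul_iff_right₀ (Real.rpow_pos_of_pos hs p)]

lemma exists_integral_ramp_rpow_eq (hs : 0 < s) (hp : -1 < p) {I : ℝ} (hI : 0 < I) :
    ∃ b > 0, ∫ x in (0 : ℝ)..b, ramp s b x ^ p = I := by
  have hp1 : 0 < p + 1 := by linarith
  have hb : 0 < (p + 1) * I / s ^ p := by positivity
  refine ⟨_, hb, ?_⟩
  rw [integral_ramp_rpow hs hb hp]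
  field_simp

end Ramp

lemma exists_sign_change_of_concaveOn {a b : ℝ} {f : ℝ → ℝ} (hab : a < b)
    (hf : ConcaveOn ℝ (Set.Ico a b) f) (ha : 0 ≤ f a) :
    ∃ c ∈ Set.Icc a b, (∀ x ∈ Set.Ico a c, 0 ≤ f x) ∧ ∀ x ∈ Set.Ioo c b, f x ≤ 0 := by
  set S : Set ℝ := {x ∈ Set.Ico a b | 0 ≤ f x}
  have haS : a ∈ S := ⟨Set.left_mem_Ico.2 hab, ha⟩
  have hbS : b ∈ upperBounds S := fun x hx => hx.1.2.le
  have hac : a ≤ sSup S := le_csSup ⟨b, hbS⟩ haS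
  refine ⟨sSup S, ⟨hac, csSup_le ⟨a, haS⟩ hbS⟩, ?_, ?_⟩
  · intro x hx
    obtain ⟨y, hyS, hxy⟩ := exists_lt_of_lt_csSup ⟨a, haS⟩ hx.2
    exact ((hf.convex_ge 0).ordConnected.out haS hyS ⟨hx.1, hxy.le⟩).2
  · intro x hx
    by_contra! hpos
    exact hx.1.not_ge (le_csSup ⟨b, hbS⟩ ⟨⟨hac.trans hx.1.le, hx.2⟩, hpos.le⟩)

lemma le_two_mul_midpoint_of_concaveOn {a b x : ℝ} {g : ℝ → ℝ} (hg : ConcaveOn ℝ (Set.Ioo a b) g)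
    (hg0 : ∀ y ∈ Set.Ioo a b, 0 ≤ g y) (hx : x ∈ Set.Ioo a b) : g x ≤ 2 * g ((a + b) / 2) := by
  have hreflect : a + b - x ∈ Set.Ioo a b := ⟨by linarith [hx.2], by linarith [hx.1]⟩
  have hmid : (1 / 2 : ℝ) * x + 1 / 2 * (a + b - x) = (a + b) / 2 := by ring
  have hconc := hg.2 hx hreflect (by norm_num : (0 : ℝ) ≤ 1 / 2) (by norm_num : (0 : ℝ) ≤ 1 / 2)
    (by norm_num)
  simp only [smul_eq_mul, hmid] at hconc
  linarith [hg0 _ hreflect]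

lemma intervalIntegrable_rpow_of_concaveOn {a b p : ℝ} {g : ℝ → ℝ} (hab : a ≤ b) (hp : 0 ≤ p)
    (hg : ConcaveOn ℝ (Set.Ioo a b) g) (hg0 : ∀ x ∈ Set.Ioo a b, 0 ≤ g x) :
    IntervalIntegrable (fun x => g x ^ p) volume a b := by
  rw [intervalIntegrable_iff_integrableOn_Ioo_of_le hab]
  have hcont : ContinuousOn (fun x => g x ^ p) (Set.Ioo a b) :=
    (hg.continuousOn isOpen_Ioo).rpow_const fun _ _ => .inr hp
  refine IntegrableOn.of_bound measure_Ioo_lt_top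
    (hcont.aestronglyMeasurable measurableSet_Ioo) ((2 * g ((a + b) / 2)) ^ p) ?_
  filter_upwards [ae_restrict_mem measurableSet_Ioo] with x hx
  rw [Real.norm_of_nonneg (Real.rpow_nonneg (hg0 x hx) p)]
  exact Real.rpow_le_rpow (hg0 x hx) (le_two_mul_midpoint_of_concaveOn hg hg0 hx) hp

section RampComparison

variable {a b p : ℝ} {g : ℝ → ℝ}

lemma ramp_le_of_concaveOn (hconc : ConcaveOn ℝ (Set.Ico 0 a) g)
    (hnonneg : ∀ x ∈ Set.Ico 0 a, 0 ≤ g x) {x : ℝ} (hx : x ∈ Set.Ico 0 a) :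
    ramp (g 0) a x ≤ g x := by
  have ha : 0 < a := hx.1.trans_lt hx.2
  have hchord : ∀ y ∈ Set.Ioo x a, ramp (g 0) y x ≤ g x := by
    intro y hy
    have hy0 : 0 < y := hx.1.trans_lt hy.1
    have hyI : y ∈ Set.Ico 0 a := ⟨hy0.le, hy.2⟩
    have hxy : x / y ≤ 1 := (div_le_one hy0).2 hy.1.le
    have h := hconc.2 (Set.left_mem_Ico.2 ha) hyI (sub_nonneg.2 hxy) (div_nonneg hx.1 hy0.le)
      (sub_add_cancel 1 (x / y))
    simp only [smul_eq_mul, mul_zero, zero_add, div_mul_cancel₀ x hy0.ne'] at h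
    exact (le_add_of_nonneg_right (mul_nonneg (div_nonneg hx.1 hy0.le) (hnonneg y hyI))).trans h
  -- `a` itself is not in the domain of `g`, so the chord to `(a, 0)` is reached as a limit.
  have hlim : ContinuousAt (fun y => ramp (g 0) y x) a := by
    unfold ramp
    fun_prop (disch := exact ha.ne')
  exact le_of_tendsto (hlim.tendsto.mono_left nhdsWithin_le_nhds)
    (Filter.eventually_of_mem (Ioo_mem_nhdsLT hx.2) hchord)

lemma integral_ramp_rpow_le (ha : 0 < a) (hp : 0 ≤ p) (hconc : ConcaveOn ℝ (Set.Ico 0 a) g)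
    (hnonneg : ∀ x ∈ Set.Ico 0 a, 0 ≤ g x) (hg0 : 0 < g 0) :
    ∫ x in (0 : ℝ)..a, ramp (g 0) a x ^ p ≤ ∫ x in (0 : ℝ)..a, g x ^ p :=
  integral_mono_on_of_le_Ioo ha.le (intervalIntegrable_ramp_rpow hg0 ha (by linarith))
    (intervalIntegrable_rpow_of_concaveOn ha.le hp
      (hconc.subset Set.Ioo_subset_Ico_self (convex_Ioo 0 a))
      fun x hx => hnonneg x (Set.Ioo_subset_Ico_self hx))
    fun _ hx => Real.rpow_le_rpow (ramp_pos hg0 ha hx.2).le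
      (ramp_le_of_concaveOn hconc hnonneg (Set.Ioo_subset_Ico_self hx)) hp

lemma exists_crossing_indicator_ramp (ha : 0 < a) (hb : 0 < b)
    (hconc : ConcaveOn ℝ (Set.Ico 0 a) g) (hg0 : 0 < g 0) :
    ∃ c, ∀ x ∈ Set.Ioo 0 b,
      (x < c → ramp (g 0) b x ≤ (Set.Ioo 0 a).indicator g x) ∧
        (c < x → (Set.Ioo 0 a).indicator g x ≤ ramp (g 0) b x) := by
  obtain ⟨c, hc, hbefore, hafter⟩ := exists_sign_change_of_concaveOn ha
    (hconc.sub (convexOn_ramp hconc.1 (g 0) b)) (by simp)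
  refine ⟨c, fun x hx => ⟨fun hxc => ?_, fun hcx => ?_⟩⟩
  · rw [Set.indicator_of_mem (show x ∈ Set.Ioo 0 a from ⟨hx.1, hxc.trans_le hc.2⟩)]
    exact sub_nonneg.1 (hbefore x ⟨hx.1.le, hxc⟩)
  · by_cases hxa : x ∈ Set.Ioo 0 a
    · rw [Set.indicator_of_mem hxa]
      exact sub_nonpos.1 (hafter x ⟨hcx, hxa.2⟩)
    · rw [Set.indicator_of_notMem hxa]
      exact (ramp_pos hg0 hb hx.2).le

lemma exists_crossing_indicator_rpow_ramp_rpow (ha : 0 < a) (hb : 0 < b) (hp : 0 ≤ p)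
    (hconc : ConcaveOn ℝ (Set.Ico 0 a) g) (hnonneg : ∀ x ∈ Set.Ico 0 a, 0 ≤ g x) (hg0 : 0 < g 0) :
    ∃ c, ∀ x ∈ Set.Ioo 0 b,
      0 ≤ (x - c) * (ramp (g 0) b x ^ p - (Set.Ioo 0 a).indicator g x ^ p) := by
  obtain ⟨c, hc⟩ := exists_crossing_indicator_ramp ha hb hconc hg0
  refine ⟨c, fun x hx => ?_⟩
  have hramp : 0 ≤ ramp (g 0) b x := (ramp_pos hg0 hb hx.2).le
  have hind : 0 ≤ (Set.Ioo 0 a).indicator g x :=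
    Set.indicator_nonneg (fun y hy => hnonneg y (Set.Ioo_subset_Ico_self hy)) x
  rcases lt_trichotomy x c with hxc | rfl | hcx
  · exact mul_nonneg_of_nonpos_of_nonpos (sub_nonpos.2 hxc.le)
      (sub_nonpos.2 (Real.rpow_le_rpow hramp ((hc x hx).1 hxc) hp))
  · simp
  · exact mul_nonneg (sub_nonneg.2 hcx.le)
      (sub_nonneg.2 (Real.rpow_le_rpow hind ((hc x hx).2 hcx) hp))

lemma indicator_rpow_ae_eq_ramp_rpow (ha : 0 < a) (hab : a ≤ b) (hp : 0 < p)
    (hconc : ConcaveOn ℝ (Set.Ico 0 a) g) (hnonneg : ∀ x ∈ Set.Ico 0 a, 0 ≤ g x) (hg0 : 0 < g 0)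
    (hmass : ∫ x in (0 : ℝ)..a, g x ^ p = ∫ x in (0 : ℝ)..b, ramp (g 0) b x ^ p)
    (hmoment : ∫ x in (0 : ℝ)..a, x * g x ^ p = ∫ x in (0 : ℝ)..b, x * ramp (g 0) b x ^ p) :
    (fun x => (Set.Ioo 0 a).indicator g x ^ p) =ᵐ[volume.restrict (Set.Ioo 0 b)]
      fun x => ramp (g 0) b x ^ p := by
  have hb : 0 < b := ha.trans_le hab
  have hrpow : (fun x => (Set.Ioo 0 a).indicator g x ^ p) =
      (Set.Ioo 0 a).indicator fun x => g x ^ p := by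
    ext x
    by_cases hx : x ∈ Set.Ioo 0 a <;> simp [hx, hp.ne']
  have hmul_rpow : (fun x => x * (Set.Ioo 0 a).indicator g x ^ p) =
      (Set.Ioo 0 a).indicator fun x => x * g x ^ p := by
    ext x
    by_cases hx : x ∈ Set.Ioo 0 a <;> simp [hx, hp.ne']
  have hg_int := intervalIntegrable_rpow_of_concaveOn ha.le hp.le
    (hconc.subset Set.Ioo_subset_Ico_self (convex_Ioo 0 a))
    fun x hx => hnonneg x (Set.Ioo_subset_Ico_self hx)
  have hramp_int := intervalIntegrable_ramp_rpow hg0 hb (neg_one_lt_zero.trans hp)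
  have hxg_int := hg_int.continuousOn_mul continuousOn_id
  have hxramp_int := hramp_int.continuousOn_mul continuousOn_id
  rw [intervalIntegrable_iff_integrableOn_Ioo_of_le ha.le] at hg_int hxg_int
  rw [intervalIntegrable_iff_integrableOn_Ioo_of_le hb.le] at hramp_int hxramp_int
  rw [integral_of_le hb.le, integral_Ioc_eq_integral_Ioo,
    ← setIntegral_Ioo_indicator_Ioo ha.le hab] at hmass hmoment
  obtain ⟨c, hcross⟩ := exists_crossing_indicator_rpow_ramp_rpow ha hb hp.le hconc hnonneg hg0
  refine ae_eq_of_single_crossing (f := id) ?_ hramp_int ?_ hxramp_int ?_ ?_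
    (ae_restrict_of_forall_mem measurableSet_Ioo hcross) (Measure.ae_ne _ c)
  · rw [hrpow]
    exact (hg_int.integrable_indicator measurableSet_Ioo).integrableOn
  · simp only [id, hmul_rpow]
    exact (hxg_int.integrable_indicator measurableSet_Ioo).integrableOn
  · simpa only [hrpow] using hmass
  · simpa only [id, hmul_rpow] using hmoment

lemma eq_and_eqOn_ramp_of_indicator_ae_eq (ha : 0 < a) (hab : a ≤ b)
    (hconc : ConcaveOn ℝ (Set.Ico 0 a) g) (hg0 : 0 < g 0)
    (hae : (Set.Ioo 0 a).indicator g =ᵐ[volume.restrict (Set.Ioo 0 b)] ramp (g 0) b) :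
    a = b ∧ Set.EqOn g (ramp (g 0) b) (Set.Ico 0 a) := by
  have hgcont : ContinuousOn g (Set.Ioo 0 a) :=
    (hconc.subset Set.Ioo_subset_Ico_self (convex_Ioo 0 a)).continuousOn isOpen_Ioo
  have hleft : Set.EqOn g (ramp (g 0) b) (Set.Ioo 0 a) := by
    refine Measure.eqOn_open_of_ae_eq (μ := volume) ?_ isOpen_Ioo hgcont
      (continuous_ramp _ _).continuousOn
    filter_upwards [ae_restrict_of_ae_restrict_of_subset (Set.Ioo_subset_Ioo_right hab) hae,
      ae_restrict_mem measurableSet_Ioo] with x hx hxa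
    rwa [Set.indicator_of_mem hxa] at hx
  have hright : Set.EqOn 0 (ramp (g 0) b) (Set.Ioo a b) := by
    refine Measure.eqOn_open_of_ae_eq (μ := volume) ?_ isOpen_Ioo continuousOn_const
      (continuous_ramp _ _).continuousOn
    filter_upwards [ae_restrict_of_ae_restrict_of_subset (Set.Ioo_subset_Ioo_left ha.le) hae,
      ae_restrict_mem measurableSet_Ioo] with x hx hxab
    rwa [Set.indicator_of_notMem fun hxa => hxab.1.not_gt hxa.2] at hx
  constructor
  · by_contra hne
    obtain ⟨x, hx⟩ := Set.nonempty_Ioo.2 (hab.lt_of_ne hne)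
    exact (ramp_pos hg0 (ha.trans_le hab) hx.2).ne (hright hx)
  · intro x hx
    rcases hx.1.eq_or_lt with rfl | hx0
    · simp
    · exact hleft ⟨hx0, hx.2⟩

lemma eq_and_eqOn_ramp_of_moment_eq (ha : 0 < a) (hab : a ≤ b) (hp : 0 < p)
    (hconc : ConcaveOn ℝ (Set.Ico 0 a) g) (hnonneg : ∀ x ∈ Set.Ico 0 a, 0 ≤ g x) (hg0 : 0 < g 0)
    (hmass : ∫ x in (0 : ℝ)..a, g x ^ p = ∫ x in (0 : ℝ)..b, ramp (g 0) b x ^ p)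
    (hmoment : ∫ x in (0 : ℝ)..a, x * g x ^ p = ∫ x in (0 : ℝ)..b, x * ramp (g 0) b x ^ p) :
    a = b ∧ Set.EqOn g (ramp (g 0) b) (Set.Ico 0 a) := by
  refine eq_and_eqOn_ramp_of_indicator_ae_eq ha hab hconc hg0 ?_
  filter_upwards [indicator_rpow_ae_eq_ramp_rpow ha hab hp hconc hnonneg hg0 hmass hmoment,
    ae_restrict_mem measurableSet_Ioo] with x hrpow hx
  have hind : 0 ≤ (Set.Ioo 0 a).indicator g x :=
    Set.indicator_nonneg (fun y hy => hnonneg y (Set.Ioo_subset_Ico_self hy)) x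
  exact (Real.rpow_left_inj hind (ramp_pos hg0 (ha.trans_le hab) hx.2).le hp.ne').1 hrpow

theorem rpow_mul_moment_eq_iff_eqOn_ramp (ha : 0 < a) (hp : 0 < p)
    (hconc : ConcaveOn ℝ (Set.Ico 0 a) g) (hnonneg : ∀ x ∈ Set.Ico 0 a, 0 ≤ g x) (hg0 : 0 < g 0) :
    g 0 ^ p * ∫ x in (0 : ℝ)..a, x * g x ^ p =
        (p + 1) / (p + 2) * (∫ x in (0 : ℝ)..a, g x ^ p) ^ 2 ↔
      Set.EqOn g (ramp (g 0) a) (Set.Ico 0 a) := by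
  have hp' : -1 < p := neg_one_lt_zero.trans hp
  constructor
  · intro heq
    have hlower := integral_ramp_rpow_le ha hp.le hconc hnonneg hg0
    have hramp_mass : 0 < ∫ x in (0 : ℝ)..a, ramp (g 0) a x ^ p := by
      rw [integral_ramp_rpow hg0 ha hp']
      positivity
    obtain ⟨b, hb, hmass⟩ := exists_integral_ramp_rpow_eq hg0 hp' (hramp_mass.trans_le hlower)
    rw [← hmass] at hlower heq
    rw [← rpow_mul_integral_mul_ramp_rpow hg0 hb hp'] at heq
    have hmoment := mul_left_cancel₀ (Real.rpow_pos_of_pos hg0 p).ne' heq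
    have hab := (integral_ramp_rpow_le_iff hg0 ha hb hp').1 hlower
    obtain ⟨rfl, heqOn⟩ :=
      eq_and_eqOn_ramp_of_moment_eq ha hab hp hconc hnonneg hg0 hmass.symm hmoment
    exact heqOn
  · intro heqOn
    have hIoo : ∀ x ∈ Set.Ioo 0 a, g x = ramp (g 0) a x := fun x hx =>
      heqOn (Set.Ioo_subset_Ico_self hx)
    have hmass : ∫ x in (0 : ℝ)..a, g x ^ p = ∫ x in (0 : ℝ)..a, ramp (g 0) a x ^ p :=
      integral_congr_Ioo_of_le ha.le fun x hx => by simp only [hIoo x hx]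
    have hmoment : ∫ x in (0 : ℝ)..a, x * g x ^ p = ∫ x in (0 : ℝ)..a, x * ramp (g 0) a x ^ p :=
      integral_congr_Ioo_of_le ha.le fun x hx => by simp only [hIoo x hx]
    rw [hmass, hmoment, rpow_mul_integral_mul_ramp_rpow hg0 ha hp']

end RampComparison

theorem stmt_7_general {a p : ℝ} (ha : 0 < a) (hp : 0 ≤ p) {g : ℝ → ℝ}
    (hconc : ConcaveOn ℝ (Set.Ico 0 a) g) (hnonneg : ∀ x ∈ Set.Ico 0 a, 0 ≤ g x) (hg0 : 0 < g 0) :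
    g 0 ^ p * ∫ x in (0 : ℝ)..a, x * g x ^ p =
        (p + 1) / (p + 2) * (∫ x in (0 : ℝ)..a, g x ^ p) ^ 2 ↔
      p = 0 ∨ ∀ x ∈ Set.Ico 0 a, g x = (1 - x / a) * g 0 := by
  rcases hp.eq_or_lt with rfl | hp
  · norm_num
    ring
  · rw [rpow_mul_moment_eq_iff_eqOn_ramp ha hp hconc hnonneg hg0, or_iff_right hp.ne']
    rfl

/-- Lemma 3.4 (equality characterization): equality in
`g(0)^{n−1}·∫_0^a x·g(x)^{n−1} dx ≤ (n/(n+1))·(∫_0^a g(x)^{n−1} dx)²` holds iff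
`n = 1` or `g x = (1 − x/a)·g 0` for all `x ∈ [0, a)`. -/
theorem stmt_7 (a : ℝ) (ha : 0 < a) (n : ℕ) (hn : 1 ≤ n) (g : ℝ → ℝ)
    (hconc : ConcaveOn ℝ (Set.Ico 0 a) g)
    (hnonneg : ∀ x ∈ Set.Ico (0 : ℝ) a, 0 ≤ g x)
    (hbdd : ∃ M : ℝ, ∀ x ∈ Set.Ico (0 : ℝ) a, |g x| ≤ M)
    (hg0 : 0 < g 0) :
    g 0 ^ (n - 1) * ∫ x in (0 : ℝ)..a, x * g x ^ (n - 1) =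
        ((n : ℝ) / (n + 1)) * (∫ x in (0 : ℝ)..a, g x ^ (n - 1)) ^ 2 ↔
      n = 1 ∨ ∀ x ∈ Set.Ico (0 : ℝ) a, g x = (1 - x / a) * g 0 := by
  obtain ⟨m, rfl⟩ : ∃ m, n = m + 1 := ⟨n - 1, by lia⟩
  have h := stmt_7_general ha m.cast_nonneg hconc hnonneg hg0
  simp only [Real.rpow_natCast, Nat.cast_eq_zero] at h
  simpa [add_assoc, one_add_one_eq_two] using h
end
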